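/- Let c₁, c₂, c₃ ∈ 𝔽_p and set Ψ₄ = Σ_{a,b ∈ 𝔽_q} Σ_{x ∈ 𝔽_p^*} ζ_p^{x·Tr(a²) − x c₁} Σ_{y ∈ 𝔽_p^*} ζ_p^{y·Tr(b²) − y c₂} Σ_{z ∈ 𝔽_p^*} ζ_p^{z·Tr(ab) − z c₃}. If m is even, then: Ψ₄ = (p−1)²(p^m + G(p−2))G if c₁ = c₂ = c₃ = 0; Ψ₄ = −(p−1)(p^m + G(p−2))G if exactly one of c₁, c₂, c₃ is nonzero; Ψ₄ = (p^m + G(p−2))G + η̄(−c₁c₂)(p^{m+1} − pG)G if c₁ ≠ 0, c₂ ≠ 0 and c₃ = 0; Ψ₄ = G(p^m − 2G) if all c_i ≠ 0 and c₃² − c₁c₂ = 0; Ψ₄ = G(p+1)(p^m − G) − G² if all c_i ≠ 0 and η̄(c₃² − c₁c₂) = 1; Ψ₄ = −G(p−1)(p^m − G) − G² if all c_i ≠ 0 and η̄(c₃² − c₁c₂) = −1; and Ψ₄ = (p^m + G(p−2))G if c₃ ≠ 0 and exactly one of c₁, c₂ is zero. -/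

import Mathlib

open Finset
open scoped Classical

noncomputable section

/-- `ζ_p = exp(2πi/p)`. -/
def zeta (p : ℕ) : ℂ := Complex.exp (2 * Real.pi * Complex.I / p)

/-- The canonical additive character of `ℤ/p`: `χ̄₁(c) = ζ_p^c`. -/
def chiBar (p : ℕ) (c : ZMod p) : ℂ := zeta p ^ c.val

/-- The quadratic character of `(ℤ/p)^*`, extended by `η̄(0) = 0`. -/
def etaBar (p : ℕ) (c : ZMod p) : ℂ :=
  if c = 0 then 0 else if IsSquare c then 1 else -1

/-- The quadratic character of `F^*`, extended by `η(0) = 0`. -/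
def etaQ (F : Type) [Field F] (x : F) : ℂ :=
  if x = 0 then 0 else if IsSquare x then 1 else -1

/-- The absolute trace map from `F` to `ℤ/p`. -/
def Trq (p : ℕ) (F : Type) [Field F] [Algebra (ZMod p) F] (x : F) : ZMod p :=
  Algebra.trace (ZMod p) F x

/-- The canonical additive character of `F`: `χ₁(x) = ζ_p^{Tr x}`. -/
def chiQ (p : ℕ) (F : Type) [Field F] [Algebra (ZMod p) F] (x : F) : ℂ :=
  chiBar p (Trq p F x)

/-- The quadratic Gauss sum `G` over `F`. -/
def GaussQ (p : ℕ) (F : Type) [Field F] [Fintype F] [Algebra (ZMod p) F] : ℂ :=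
  ∑ x ∈ univ.filter (fun x : F => x ≠ 0), etaQ F x * chiQ p F x

/-- The quadratic Gauss sum `Ḡ` over `ℤ/p`. -/
def GaussP (p : ℕ) [NeZero p] : ℂ :=
  ∑ y ∈ univ.filter (fun y : ZMod p => y ≠ 0), etaBar p y * chiBar p y

/-!
Expanding `Ψ₄` gives `∑_{x,y,z ≠ 0} ζ^{-(xc₁ + yc₂ + zc₃)} S(x, y, z)`, where `S(x, y, z)` is the
exponential sum over `(a, b)` of the binary quadratic form `x a² + y b² + z ab`. Since `m` is even,
every element of the prime field is a square in `F`, so completing the square gives `S = G²`, except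
on the cone `4xy = z²`, where `S = p^m G`. The contribution of `G²` is a product of three geometric
sums. The cone is parametrized by `(y, z) = (xt², 2xt)` with `t ≠ 0`, so that the sum over `x`
detects the roots `t` of `c₂t² + 2c₃t + c₁`; the cases of the theorem are those of counting them.
-/

lemma sum_mul_sum_mul_sum {ι κ μ R : Type*} [NonUnitalNonAssocSemiring R] (s : Finset ι)
    (t : Finset κ) (u : Finset μ) (f : ι → R) (g : κ → R) (h : μ → R) :
    (∑ x ∈ s, f x) * (∑ y ∈ t, g y) * (∑ z ∈ u, h z) =
      ∑ x ∈ s, ∑ y ∈ t, ∑ z ∈ u, f x * g y * h z := by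
  simp_rw [sum_mul, mul_sum, sum_mul]
  exact sum_congr rfl fun x _ ↦ sum_comm

lemma four_ne_zero_of_ringChar_ne_two {F : Type*} [Field F] (hF : ringChar F ≠ 2) :
    (4 : F) ≠ 0 := by
  rw [show (4 : F) = 2 * 2 by norm_num]
  exact mul_self_ne_zero.mpr (Ring.two_ne_zero hF)

section QuadraticSums

variable {F R : Type*} [Field F] [Fintype F] [CommRing R]

/-- The Gauss sum of the quadratic character of `F` and the additive character `χ`, the `G` of the
theorem when `χ` is the canonical additive character. -/
def quadraticGaussSum (χ : AddChar F R) : R :=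
  gaussSum ((quadraticChar F).ringHomComp (Int.castRingHom R)) χ

lemma cast_card_sqrts [DecidableEq F] (hF : ringChar F ≠ 2) (v : F) :
    (#{u : F | u ^ 2 = v} : R) = quadraticChar F v + 1 := by
  have h := congrArg (Int.cast (R := R)) (quadraticChar_card_sqrts hF v)
  simpa using h

lemma sum_comp_sq (hF : ringChar F ≠ 2) (f : F → R) :
    ∑ u, f (u ^ 2) = ∑ v, (quadraticChar F v + 1) * f v := by
  rw [← sum_fiberwise univ (fun u : F ↦ u ^ 2)]
  refine sum_congr rfl fun v _ ↦ ?_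
  rw [sum_congr rfl fun u hu ↦ congrArg f (mem_filter.mp hu).2, sum_const, nsmul_eq_mul,
    cast_card_sqrts hF]

lemma sum_addChar_sq [IsDomain R] (hF : ringChar F ≠ 2) {χ : AddChar F R} (hχ : χ ≠ 1) :
    ∑ u, χ (u ^ 2) = quadraticGaussSum χ := by
  simp [sum_comp_sq hF, add_mul, sum_add_distrib, AddChar.sum_eq_zero_of_ne_one hχ,
    quadraticGaussSum, gaussSum]

lemma sum_addChar_mul_sq_of_isSquare (χ : AddChar F R) {x : F} (hx : x ≠ 0) (hsq : IsSquare x) :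
    ∑ u, χ (x * u ^ 2) = ∑ u, χ (u ^ 2) := by
  obtain ⟨s, rfl⟩ := hsq
  rw [← Equiv.sum_comp (Equiv.mulLeft₀ s (left_ne_zero_of_mul hx)) fun u ↦ χ (u ^ 2)]
  refine sum_congr rfl fun u _ ↦ congrArg χ ?_
  change s * s * u ^ 2 = (s * u) ^ 2
  ring

lemma sum_sum_addChar_binaryForm (hF : ringChar F ≠ 2) (χ : AddChar F R) {x : F} (hx : x ≠ 0)
    (y z : F) :
    ∑ a, ∑ b, χ (x * a ^ 2 + y * b ^ 2 + z * (a * b)) =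
      (∑ u, χ (x * u ^ 2)) * ∑ u, χ ((y - z ^ 2 / (4 * x)) * u ^ 2) := by
  have h2 : (2 : F) ≠ 0 := Ring.two_ne_zero hF
  have h4 := four_ne_zero_of_ringChar_ne_two hF
  rw [mul_comm, sum_mul_sum, sum_comm]
  refine sum_congr rfl fun b _ ↦ ?_
  rw [← Equiv.sum_comp (Equiv.subRight (z / (2 * x) * b))]
  refine sum_congr rfl fun a _ ↦ ?_
  rw [← AddChar.map_add_eq_mul, Equiv.subRight_apply]
  congr 1
  field_simp
  ring

lemma sum_sum_addChar_binaryForm_of_isSquare [IsDomain R] (hF : ringChar F ≠ 2)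
    {χ : AddChar F R} (hχ : χ ≠ 1) {x y z : F} (hx : x ≠ 0) (hsq : IsSquare x)
    (hdisc : IsSquare (y - z ^ 2 / (4 * x))) :
    ∑ a, ∑ b, χ (x * a ^ 2 + y * b ^ 2 + z * (a * b)) =
      quadraticGaussSum χ *
        if 4 * x * y = z ^ 2 then (Fintype.card F : R) else quadraticGaussSum χ := by
  have h4 := four_ne_zero_of_ringChar_ne_two hF
  have hcone : 4 * x * y = z ^ 2 ↔ y - z ^ 2 / (4 * x) = 0 := by
    rw [sub_eq_zero, eq_div_iff (mul_ne_zero h4 hx), mul_comm y]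
  rw [sum_sum_addChar_binaryForm hF χ hx, sum_addChar_mul_sq_of_isSquare χ hx hsq,
    sum_addChar_sq hF hχ]
  split_ifs with h
  · simp [hcone.mp h]
  · rw [sum_addChar_mul_sq_of_isSquare χ (mt hcone.mpr h) hdisc, sum_addChar_sq hF hχ]

end QuadraticSums

section Extension

variable {K R : Type*} (F : Type*) [Field K] [Field F] [Algebra K F]

/-- The additive character `a ↦ ψ (Tr a)` of `F` obtained from the additive character `ψ` of `K`. -/
def traceChar [Monoid R] (ψ : AddChar K R) : AddChar F R :=
  ψ.compAddMonoidHom (Algebra.trace K F).toAddMonoidHom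

@[simp]
lemma traceChar_apply [Monoid R] (ψ : AddChar K R) (a : F) :
    traceChar F ψ a = ψ (Algebra.trace K F a) :=
  rfl

lemma traceChar_ne_one [Monoid R] [FiniteDimensional K F] [Algebra.IsSeparable K F]
    {ψ : AddChar K R} (hψ : ψ ≠ 1) : traceChar F ψ ≠ 1 := by
  obtain ⟨c, hc⟩ := AddChar.ne_one_iff.mp hψ
  obtain ⟨a, rfl⟩ := Algebra.trace_surjective K F c
  exact AddChar.ne_one_iff.mpr ⟨a, hc⟩

lemma isSquare_algebraMap_of_even_finrank [Finite F] (heven : Even (Module.finrank K F)) (x : K) :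
    IsSquare (algebraMap K F x) := by
  have : Fintype F := Fintype.ofFinite F
  have : Fintype K := Fintype.ofInjective _ (algebraMap K F).injective
  by_cases hF : ringChar F = 2
  · exact FiniteField.isSquare_of_char_two hF _
  obtain rfl | hx := eq_or_ne x 0
  · simp
  obtain ⟨k, hk⟩ := heven
  have hcard : Fintype.card F = Fintype.card K ^ k * Fintype.card K ^ k := by
    rw [Module.card_eq_pow_finrank (K := K), hk, pow_add]
  obtain ⟨j, hj⟩ : Odd (Fintype.card K ^ k) := by
    have hodd := Nat.odd_iff.mpr (FiniteField.odd_card_of_char_ne_two hF)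
    exact (Nat.odd_mul.mp (hcard ▸ hodd)).1
  have hpow : x ^ (2 * j) = 1 := by
    refine mul_right_cancel₀ hx ?_
    rw [one_mul, ← pow_succ, ← hj, FiniteField.pow_card_pow]
  have hhalf : Fintype.card F / 2 = 2 * j * (j + 1) := by
    rw [hcard, hj, show (2 * j + 1) * (2 * j + 1) = 2 * (2 * j * (j + 1)) + 1 by ring]
    omega
  rw [FiniteField.isSquare_iff hF (by simpa using hx), hhalf, ← map_pow, pow_mul, hpow, one_pow,
    map_one]

lemma sum_sum_traceChar_binaryForm [DecidableEq K] [Fintype F] [CommRing R] [IsDomain R]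
    (hK : ringChar K ≠ 2) (heven : Even (Module.finrank K F)) {ψ : AddChar K R} (hψ : ψ ≠ 1)
    {x : K} (hx : x ≠ 0) (y z : K) :
    ∑ a : F, ∑ b : F, traceChar F ψ (algebraMap K F x * a ^ 2 + algebraMap K F y * b ^ 2 +
        algebraMap K F z * (a * b)) =
      quadraticGaussSum (traceChar F ψ) *
        if 4 * x * y = z ^ 2 then (Fintype.card F : R)
        else quadraticGaussSum (traceChar F ψ) := by
  have hF : ringChar F ≠ 2 := by rwa [← Algebra.ringChar_eq K F]
  have hdisc : IsSquare (algebraMap K F y - algebraMap K F z ^ 2 / (4 * algebraMap K F x)) := by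
    have h := isSquare_algebraMap_of_even_finrank F heven (y - z ^ 2 / (4 * x))
    rwa [_root_.map_sub, map_div₀, map_pow, map_mul, map_ofNat] at h
  have hcone : 4 * algebraMap K F x * algebraMap K F y = algebraMap K F z ^ 2 ↔
      4 * x * y = z ^ 2 := by
    rw [← (algebraMap K F).injective.eq_iff]
    simp [map_ofNat]
  simp_rw [sum_sum_addChar_binaryForm_of_isSquare hF (traceChar_ne_one F hψ) (by simpa using hx)
    (isSquare_algebraMap_of_even_finrank F heven x) hdisc, hcone]

end Extension

section BaseField

variable {K : Type*} [Field K] [Fintype K] [DecidableEq K]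

lemma sum_ne_zero_addChar_mul {R : Type*} [CommRing R] [IsDomain R] {ψ : AddChar K R}
    (hψ : ψ ≠ 1) (c : K) :
    ∑ x with x ≠ 0, ψ (x * c) = (Fintype.card K : R) * (if c = 0 then 1 else 0) - 1 := by
  have hsum := AddChar.sum_mulShift c (AddChar.IsPrimitive.of_ne_one hψ)
  rw [filter_ne', sum_erase_eq_sub (mem_univ _), hsum]
  simp

lemma sum_ite_four_mul_mul_eq_sq {M : Type*} [AddCommMonoid M] (hK : ringChar K ≠ 2)
    (f : K → K → K → M) :
    ∑ x with x ≠ 0, ∑ y with y ≠ 0, ∑ z with z ≠ 0,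
        (if 4 * x * y = z ^ 2 then f x y z else 0) =
      ∑ x with x ≠ 0, ∑ t with t ≠ 0, f x (x * t ^ 2) (2 * x * t) := by
  have h2 : (2 : K) ≠ 0 := Ring.two_ne_zero hK
  have h4 := four_ne_zero_of_ringChar_ne_two hK
  refine sum_congr rfl fun x hx ↦ ?_
  replace hx : x ≠ 0 := by simpa using hx
  rw [sum_comm]
  refine (sum_nbij' (2 * x * ·) (· / (2 * x)) (by simp [h2, hx]) (by simp [h2, hx])
    (by simp [h2, hx]) (fun z _ ↦ by field_simp) fun t ht ↦ ?_).symm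
  replace ht : t ≠ 0 := by simpa using ht
  have hcone (y : K) : 4 * x * y = (2 * x * t) ^ 2 ↔ y = x * t ^ 2 := by
    rw [show (2 * x * t) ^ 2 = 4 * x * (x * t ^ 2) by ring, mul_right_inj' (mul_ne_zero h4 hx)]
  simp [hcone, hx, ht]

/-- The nonzero solutions of `c₂ t² + 2 c₃ t + c₁ = 0`. The leading coefficient is allowed to
vanish. -/
def nonzeroRoots (c₁ c₂ c₃ : K) : Finset K :=
  {t | t ≠ 0 ∧ c₂ * t ^ 2 + 2 * c₃ * t + c₁ = 0}

lemma card_nonzeroRoots_zero : #(nonzeroRoots (0 : K) 0 0) = Fintype.card K - 1 := by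
  simp [nonzeroRoots, filter_ne']

lemma nonzeroRoots_eq_empty (hK : ringChar K ≠ 2) {c₁ c₂ c₃ : K}
    (h : (c₁ ≠ 0 ∧ c₂ = 0 ∧ c₃ = 0) ∨ (c₁ = 0 ∧ c₂ ≠ 0 ∧ c₃ = 0) ∨ (c₁ = 0 ∧ c₂ = 0 ∧ c₃ ≠ 0)) :
    nonzeroRoots c₁ c₂ c₃ = ∅ := by
  have h2 : (2 : K) ≠ 0 := Ring.two_ne_zero hK
  rcases h with ⟨h, rfl, rfl⟩ | ⟨rfl, h, rfl⟩ | ⟨rfl, rfl, h⟩ <;> ext t <;>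
    simp [nonzeroRoots, h, h2]

lemma cast_card_nonzeroRoots {R : Type*} [CommRing R] (hK : ringChar K ≠ 2) {c₁ c₂ : K}
    (h₁ : c₁ ≠ 0) (h₂ : c₂ ≠ 0) (c₃ : K) :
    (#(nonzeroRoots c₁ c₂ c₃) : R) = quadraticChar K (c₃ ^ 2 - c₁ * c₂) + 1 := by
  rw [← cast_card_sqrts hK]
  congr 1
  have hroot (t : K) : t ∈ nonzeroRoots c₁ c₂ c₃ ↔ (c₂ * t + c₃) ^ 2 = c₃ ^ 2 - c₁ * c₂ := by
    have hsq : (c₂ * t + c₃) ^ 2 - (c₃ ^ 2 - c₁ * c₂) = c₂ * (c₂ * t ^ 2 + 2 * c₃ * t + c₁) := by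
      ring
    have ht (h : c₂ * t ^ 2 + 2 * c₃ * t + c₁ = 0) : t ≠ 0 := by
      rintro rfl
      exact h₁ (by simpa using h)
    rw [← sub_eq_zero, hsq, mul_eq_zero, or_iff_right h₂, nonzeroRoots, mem_filter_univ]
    exact and_iff_right_of_imp ht
  refine card_nbij' (fun t ↦ c₂ * t + c₃) (fun u ↦ (u - c₃) / c₂) ?_ ?_ ?_ ?_
  · intro t ht
    simpa using (hroot t).mp ht
  · intro u hu
    rw [mem_coe, hroot, mul_div_cancel₀ _ h₂]
    simpa using hu
  · intro t _
    field_simp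
    ring
  · intro u _
    field_simp
    ring

lemma card_nonzeroRoots_eq_one (hK : ringChar K ≠ 2) {c₁ c₂ c₃ : K} (h₃ : c₃ ≠ 0)
    (h : (c₁ = 0 ∧ c₂ ≠ 0) ∨ (c₁ ≠ 0 ∧ c₂ = 0)) : #(nonzeroRoots c₁ c₂ c₃) = 1 := by
  have h2 : (2 : K) ≠ 0 := Ring.two_ne_zero hK
  rw [card_eq_one]
  rcases h with ⟨rfl, h₂⟩ | ⟨h₁, rfl⟩
  · refine ⟨-(2 * c₃) / c₂, ?_⟩
    ext t
    rw [nonzeroRoots, mem_filter_univ, mem_singleton, eq_div_iff h₂]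
    constructor
    · rintro ⟨ht, hroot⟩
      exact mul_left_cancel₀ ht (by linear_combination hroot)
    · intro hroot
      refine ⟨?_, by linear_combination t * hroot⟩
      rintro rfl
      simp [h2, h₃] at hroot
  · refine ⟨-c₁ / (2 * c₃), ?_⟩
    ext t
    rw [nonzeroRoots, mem_filter_univ, mem_singleton, eq_div_iff (mul_ne_zero h2 h₃)]
    constructor
    · rintro ⟨-, hroot⟩
      linear_combination hroot
    · intro hroot
      refine ⟨?_, by linear_combination hroot⟩
      rintro rfl
      simp [h₁] at hroot

lemma sum_ite_addChar_eq_card_nonzeroRoots {R : Type*} [CommRing R] [IsDomain R]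
    (hK : ringChar K ≠ 2) {ψ : AddChar K R} (hψ : ψ ≠ 1) (c₁ c₂ c₃ : K) :
    ∑ x with x ≠ 0, ∑ y with y ≠ 0, ∑ z with z ≠ 0,
        (if 4 * x * y = z ^ 2 then ψ (x * -c₁) * ψ (y * -c₂) * ψ (z * -c₃) else 0) =
      (Fintype.card K : R) * #(nonzeroRoots c₁ c₂ c₃) - ((Fintype.card K : R) - 1) := by
  have hpoly (x t : K) : ψ (x * -c₁) * ψ (x * t ^ 2 * -c₂) * ψ (2 * x * t * -c₃) =
      ψ (x * -(c₂ * t ^ 2 + 2 * c₃ * t + c₁)) := by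
    rw [← AddChar.map_add_eq_mul, ← AddChar.map_add_eq_mul]
    congr 1
    ring
  rw [sum_ite_four_mul_mul_eq_sq hK, sum_comm]
  simp_rw [hpoly, sum_ne_zero_addChar_mul hψ, neg_eq_zero]
  rw [sum_sub_distrib, ← mul_sum, sum_boole, filter_filter, ← nonzeroRoots]
  simp [filter_ne', Nat.cast_pred Fintype.card_pos]

end BaseField

section Psi4

variable {K R : Type*} (F : Type*) [Field K] [Fintype K] [DecidableEq K] [Field F] [Fintype F]
  [Algebra K F] [CommRing R]

/-- The sum `Ψ₄`, for a finite extension `F / K` of finite fields and an additive character `ψ`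
of `K` in place of `t ↦ ζ_p ^ t`. -/
def Psi4 (ψ : AddChar K R) (c₁ c₂ c₃ : K) : R :=
  ∑ a : F, ∑ b : F,
    (∑ x with x ≠ 0, ψ (x * Algebra.trace K F (a ^ 2) - x * c₁)) *
    (∑ y with y ≠ 0, ψ (y * Algebra.trace K F (b ^ 2) - y * c₂)) *
    (∑ z with z ≠ 0, ψ (z * Algebra.trace K F (a * b) - z * c₃))

lemma Psi4_eq_sum_binaryForm (ψ : AddChar K R) (c₁ c₂ c₃ : K) :
    Psi4 F ψ c₁ c₂ c₃ =
      ∑ x with x ≠ 0, ∑ y with y ≠ 0, ∑ z with z ≠ 0,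
        ψ (x * -c₁) * ψ (y * -c₂) * ψ (z * -c₃) *
          ∑ a : F, ∑ b : F, traceChar F ψ (algebraMap K F x * a ^ 2 + algebraMap K F y * b ^ 2 +
            algebraMap K F z * (a * b)) := by
  have hterm (a b : F) (x y z : K) :
      ψ (x * Algebra.trace K F (a ^ 2) - x * c₁) * ψ (y * Algebra.trace K F (b ^ 2) - y * c₂) *
        ψ (z * Algebra.trace K F (a * b) - z * c₃) =
      ψ (x * -c₁) * ψ (y * -c₂) * ψ (z * -c₃) *
        traceChar F ψ (algebraMap K F x * a ^ 2 + algebraMap K F y * b ^ 2 +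
          algebraMap K F z * (a * b)) := by
    simp only [traceChar_apply, map_add, ← Algebra.smul_def, map_smul, smul_eq_mul,
      ← AddChar.map_add_eq_mul]
    congr 1
    ring
  simp only [Psi4, sum_mul_sum_mul_sum, hterm, ← mul_sum,
    sum_comm (s := (univ : Finset F)) (t := ({x | x ≠ 0} : Finset K))]

lemma Psi4_eq_card_nonzeroRoots [IsDomain R] (hK : ringChar K ≠ 2)
    (heven : Even (Module.finrank K F)) {ψ : AddChar K R} (hψ : ψ ≠ 1) (c₁ c₂ c₃ : K) {G : R}
    (hG : quadraticGaussSum (traceChar F ψ) = G) :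
    Psi4 F ψ c₁ c₂ c₃ =
      G ^ 2 *
        (((Fintype.card K : R) * (if c₁ = 0 then 1 else 0) - 1) *
          ((Fintype.card K : R) * (if c₂ = 0 then 1 else 0) - 1) *
          ((Fintype.card K : R) * (if c₃ = 0 then 1 else 0) - 1)) +
      G * ((Fintype.card F : R) - G) *
        ((Fintype.card K : R) * #(nonzeroRoots c₁ c₂ c₃) - ((Fintype.card K : R) - 1)) := by
  have hgeom (c : K) : ∑ x with x ≠ 0, ψ (x * -c) =
      (Fintype.card K : R) * (if c = 0 then 1 else 0) - 1 := by
    simp only [sum_ne_zero_addChar_mul hψ, neg_eq_zero]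
  have hsplit (x y z : K) (w : R) :
      w * (G * if 4 * x * y = z ^ 2 then (Fintype.card F : R) else G) =
        G ^ 2 * w + G * ((Fintype.card F : R) - G) * if 4 * x * y = z ^ 2 then w else 0 := by
    split_ifs <;> ring
  rw [← hgeom, ← hgeom, ← hgeom, ← sum_ite_addChar_eq_card_nonzeroRoots hK hψ,
    Psi4_eq_sum_binaryForm, sum_mul_sum_mul_sum]
  simp only [mul_sum, ← sum_add_distrib]
  refine sum_congr rfl fun x hx ↦ sum_congr rfl fun y _ ↦ sum_congr rfl fun z _ ↦ ?_
  simp only [← mul_sum]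
  rw [sum_sum_traceChar_binaryForm F hK heven hψ (by simpa using hx), hG, hsplit]

theorem Psi4_eval_m_even_general [IsDomain R] {q m : ℕ} (hq : Fintype.card K = q)
    (hcard : Fintype.card F = q ^ m) (hm : Even m) (hK : ringChar K ≠ 2) {ψ : AddChar K R}
    (hψ : ψ ≠ 1) (c₁ c₂ c₃ : K) {G : R} (hG : quadraticGaussSum (traceChar F ψ) = G) :
    (c₁ = 0 ∧ c₂ = 0 ∧ c₃ = 0 →
      Psi4 F ψ c₁ c₂ c₃ = ((q : R) - 1) ^ 2 * ((q : R) ^ m + G * ((q : R) - 2)) * G) ∧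
    ((c₁ ≠ 0 ∧ c₂ = 0 ∧ c₃ = 0) ∨ (c₁ = 0 ∧ c₂ ≠ 0 ∧ c₃ = 0) ∨ (c₁ = 0 ∧ c₂ = 0 ∧ c₃ ≠ 0) →
      Psi4 F ψ c₁ c₂ c₃ = -(((q : R) - 1) * ((q : R) ^ m + G * ((q : R) - 2)) * G)) ∧
    (c₁ ≠ 0 ∧ c₂ ≠ 0 ∧ c₃ = 0 →
      Psi4 F ψ c₁ c₂ c₃ = ((q : R) ^ m + G * ((q : R) - 2)) * G +
        quadraticChar K (-(c₁ * c₂)) * ((q : R) ^ (m + 1) - (q : R) * G) * G) ∧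
    ((c₁ ≠ 0 ∧ c₂ ≠ 0 ∧ c₃ ≠ 0) ∧ c₃ ^ 2 - c₁ * c₂ = 0 →
      Psi4 F ψ c₁ c₂ c₃ = G * ((q : R) ^ m - 2 * G)) ∧
    ((c₁ ≠ 0 ∧ c₂ ≠ 0 ∧ c₃ ≠ 0) ∧ (quadraticChar K (c₃ ^ 2 - c₁ * c₂) : R) = 1 →
      Psi4 F ψ c₁ c₂ c₃ = G * ((q : R) + 1) * ((q : R) ^ m - G) - G ^ 2) ∧
    ((c₁ ≠ 0 ∧ c₂ ≠ 0 ∧ c₃ ≠ 0) ∧ (quadraticChar K (c₃ ^ 2 - c₁ * c₂) : R) = -1 →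
      Psi4 F ψ c₁ c₂ c₃ = -(G * ((q : R) - 1) * ((q : R) ^ m - G)) - G ^ 2) ∧
    (c₃ ≠ 0 ∧ ((c₁ = 0 ∧ c₂ ≠ 0) ∨ (c₁ ≠ 0 ∧ c₂ = 0)) →
      Psi4 F ψ c₁ c₂ c₃ = ((q : R) ^ m + G * ((q : R) - 2)) * G) := by
  have hrank : Module.finrank K F = m := by
    refine Nat.pow_right_injective (Fintype.one_lt_card (α := K)) ?_
    dsimp only
    rw [← Module.card_eq_pow_finrank, hcard, hq]
  rw [Psi4_eq_card_nonzeroRoots F hK (hrank ▸ hm) hψ c₁ c₂ c₃ hG, hcard, hq, Nat.cast_pow]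
  have hcount := cast_card_nonzeroRoots (R := R) hK (c₁ := c₁) (c₂ := c₂) (c₃ := c₃)
  refine ⟨?_, fun h ↦ ?_, ?_, ?_, ?_, ?_, fun ⟨h₃, h⟩ ↦ ?_⟩
  · rintro ⟨rfl, rfl, rfl⟩
    rw [card_nonzeroRoots_zero, Nat.cast_pred Fintype.card_pos, hq]
    simp only [if_true]
    ring
  · rw [nonzeroRoots_eq_empty hK h]
    rcases h with ⟨h, rfl, rfl⟩ | ⟨rfl, h, rfl⟩ | ⟨rfl, rfl, h⟩ <;>
      simp only [h, if_true, if_false, card_empty, Nat.cast_zero] <;> ring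
  · rintro ⟨h₁, h₂, rfl⟩
    rw [hcount h₁ h₂, zero_pow two_ne_zero, zero_sub]
    simp only [h₁, h₂, if_true, if_false]
    ring
  · rintro ⟨⟨h₁, h₂, h₃⟩, h⟩
    simp only [hcount h₁ h₂, h, h₁, h₂, h₃, if_false, MulChar.map_zero, Int.cast_zero]
    ring
  · rintro ⟨⟨h₁, h₂, h₃⟩, h⟩
    simp only [hcount h₁ h₂, h, h₁, h₂, h₃, if_false]
    ring
  · rintro ⟨⟨h₁, h₂, h₃⟩, h⟩
    simp only [hcount h₁ h₂, h, h₁, h₂, h₃, if_false]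
    ring
  · rw [card_nonzeroRoots_eq_one hK h₃ h]
    rcases h with ⟨rfl, h₂⟩ | ⟨h₁, rfl⟩ <;> simp only [*, if_true, if_false, Nat.cast_one] <;> ring

end Psi4

section PrimeField

variable (p : ℕ) [Fact p.Prime]

lemma chiBar_eq_stdAddChar (c : ZMod p) : chiBar p c = ZMod.stdAddChar c := by
  have h := ZMod.stdAddChar_coe (N := p) (c.val : ℤ)
  rw [Int.cast_natCast, ZMod.natCast_zmod_val] at h
  rw [h, chiBar, zeta, ← Complex.exp_nat_mul]
  congr 1
  push_cast
  ring

lemma etaBar_eq_quadraticChar (c : ZMod p) : etaBar p c = (quadraticChar (ZMod p) c : ℂ) := by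
  rw [etaBar, quadraticChar_apply, quadraticCharFun]
  split_ifs <;> simp

lemma GaussQ_eq_quadraticGaussSum (F : Type) [Field F] [Fintype F] [Algebra (ZMod p) F] :
    GaussQ p F = quadraticGaussSum (traceChar F (ZMod.stdAddChar (N := p))) := by
  rw [GaussQ, sum_filter_of_ne (by simp +contextual [etaQ])]
  refine sum_congr rfl fun x _ ↦ ?_
  rw [etaQ, chiQ, chiBar_eq_stdAddChar, MulChar.ringHomComp_apply, quadraticChar_apply,
    quadraticCharFun]
  split_ifs <;> simp [Trq]

end PrimeField

theorem Psi4_eval_m_even (p m : ℕ) [Fact (Nat.Prime p)] (hp : Odd p)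
    (F : Type) [Field F] [Fintype F] [Algebra (ZMod p) F]
    (hm : 0 < m) (hq : Fintype.card F = p ^ m)
    (hmeven : Even m) (c₁ c₂ c₃ : ZMod p) :
    (c₁ = 0 ∧ c₂ = 0 ∧ c₃ = 0 →
      (∑ a : F, ∑ b : F,
      (∑ x ∈ univ.filter (fun x : ZMod p => x ≠ 0), chiBar p (x * Trq p F (a ^ 2) - x * c₁)) *
      (∑ y ∈ univ.filter (fun y : ZMod p => y ≠ 0), chiBar p (y * Trq p F (b ^ 2) - y * c₂)) *
      (∑ z ∈ univ.filter (fun z : ZMod p => z ≠ 0), chiBar p (z * Trq p F (a * b) - z * c₃))) = ((p : ℂ) - 1) ^ 2 * ((p : ℂ) ^ m + GaussQ p F * ((p : ℂ) - 2)) * GaussQ p F) ∧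
    ((c₁ ≠ 0 ∧ c₂ = 0 ∧ c₃ = 0) ∨ (c₁ = 0 ∧ c₂ ≠ 0 ∧ c₃ = 0) ∨ (c₁ = 0 ∧ c₂ = 0 ∧ c₃ ≠ 0) →
      (∑ a : F, ∑ b : F,
      (∑ x ∈ univ.filter (fun x : ZMod p => x ≠ 0), chiBar p (x * Trq p F (a ^ 2) - x * c₁)) *
      (∑ y ∈ univ.filter (fun y : ZMod p => y ≠ 0), chiBar p (y * Trq p F (b ^ 2) - y * c₂)) *
      (∑ z ∈ univ.filter (fun z : ZMod p => z ≠ 0), chiBar p (z * Trq p F (a * b) - z * c₃))) = -(((p : ℂ) - 1) * ((p : ℂ) ^ m + GaussQ p F * ((p : ℂ) - 2)) * GaussQ p F)) ∧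
    (c₁ ≠ 0 ∧ c₂ ≠ 0 ∧ c₃ = 0 →
      (∑ a : F, ∑ b : F,
      (∑ x ∈ univ.filter (fun x : ZMod p => x ≠ 0), chiBar p (x * Trq p F (a ^ 2) - x * c₁)) *
      (∑ y ∈ univ.filter (fun y : ZMod p => y ≠ 0), chiBar p (y * Trq p F (b ^ 2) - y * c₂)) *
      (∑ z ∈ univ.filter (fun z : ZMod p => z ≠ 0), chiBar p (z * Trq p F (a * b) - z * c₃))) = ((p : ℂ) ^ m + GaussQ p F * ((p : ℂ) - 2)) * GaussQ p F + etaBar p (-(c₁ * c₂)) * ((p : ℂ) ^ (m + 1) - (p : ℂ) * GaussQ p F) * GaussQ p F) ∧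
    ((c₁ ≠ 0 ∧ c₂ ≠ 0 ∧ c₃ ≠ 0) ∧ c₃ ^ 2 - c₁ * c₂ = 0 →
      (∑ a : F, ∑ b : F,
      (∑ x ∈ univ.filter (fun x : ZMod p => x ≠ 0), chiBar p (x * Trq p F (a ^ 2) - x * c₁)) *
      (∑ y ∈ univ.filter (fun y : ZMod p => y ≠ 0), chiBar p (y * Trq p F (b ^ 2) - y * c₂)) *
      (∑ z ∈ univ.filter (fun z : ZMod p => z ≠ 0), chiBar p (z * Trq p F (a * b) - z * c₃))) = GaussQ p F * ((p : ℂ) ^ m - 2 * GaussQ p F)) ∧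
    ((c₁ ≠ 0 ∧ c₂ ≠ 0 ∧ c₃ ≠ 0) ∧ etaBar p (c₃ ^ 2 - c₁ * c₂) = 1 →
      (∑ a : F, ∑ b : F,
      (∑ x ∈ univ.filter (fun x : ZMod p => x ≠ 0), chiBar p (x * Trq p F (a ^ 2) - x * c₁)) *
      (∑ y ∈ univ.filter (fun y : ZMod p => y ≠ 0), chiBar p (y * Trq p F (b ^ 2) - y * c₂)) *
      (∑ z ∈ univ.filter (fun z : ZMod p => z ≠ 0), chiBar p (z * Trq p F (a * b) - z * c₃))) = GaussQ p F * ((p : ℂ) + 1) * ((p : ℂ) ^ m - GaussQ p F) - (GaussQ p F) ^ 2) ∧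
    ((c₁ ≠ 0 ∧ c₂ ≠ 0 ∧ c₃ ≠ 0) ∧ etaBar p (c₃ ^ 2 - c₁ * c₂) = -1 →
      (∑ a : F, ∑ b : F,
      (∑ x ∈ univ.filter (fun x : ZMod p => x ≠ 0), chiBar p (x * Trq p F (a ^ 2) - x * c₁)) *
      (∑ y ∈ univ.filter (fun y : ZMod p => y ≠ 0), chiBar p (y * Trq p F (b ^ 2) - y * c₂)) *
      (∑ z ∈ univ.filter (fun z : ZMod p => z ≠ 0), chiBar p (z * Trq p F (a * b) - z * c₃))) = -(GaussQ p F * ((p : ℂ) - 1) * ((p : ℂ) ^ m - GaussQ p F)) - (GaussQ p F) ^ 2) ∧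
    (c₃ ≠ 0 ∧ ((c₁ = 0 ∧ c₂ ≠ 0) ∨ (c₁ ≠ 0 ∧ c₂ = 0)) →
      (∑ a : F, ∑ b : F,
      (∑ x ∈ univ.filter (fun x : ZMod p => x ≠ 0), chiBar p (x * Trq p F (a ^ 2) - x * c₁)) *
      (∑ y ∈ univ.filter (fun y : ZMod p => y ≠ 0), chiBar p (y * Trq p F (b ^ 2) - y * c₂)) *
      (∑ z ∈ univ.filter (fun z : ZMod p => z ≠ 0), chiBar p (z * Trq p F (a * b) - z * c₃))) = ((p : ℂ) ^ m + GaussQ p F * ((p : ℂ) - 2)) * GaussQ p F) := by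
  have hp2 : ringChar (ZMod p) ≠ 2 := by
    rw [ZMod.ringChar_zmod_n]
    exact hp.ne_two_of_dvd_nat dvd_rfl
  have hψ : ZMod.stdAddChar (N := p) ≠ 1 := by
    simpa using ZMod.isPrimitive_stdAddChar p one_ne_zero
  simp only [chiBar_eq_stdAddChar, etaBar_eq_quadraticChar, GaussQ_eq_quadraticGaussSum]
  exact Psi4_eval_m_even_general F (ZMod.card p) hq hmeven hp2 hψ c₁ c₂ c₃ rfl
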